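/- Let K ⊂ ℝⁿ be a convex body containing the origin in its interior, and p > 0. Then the L_p affine surface area defined by Ω_p(K) = inf over positive continuous g : ∂K → ℝ of (∫_{∂K} g^{-n} dC₀(K,·))^{p/(n+p)} (∫_{∂K} g^p (h_K∘ν_K)^{1-p} dC_{n-1}(K,·))^{n/(n+p)} equals ∫_{∂K} (H_K(x) / h_K(ν_K(x))^{(p-1)n/p})^{p/(n+p)} dH^{n-1}(x). -/

import Mathlib

open MeasureTheory Metric Set Filter
open scoped RealInnerProductSpace ENNReal NNReal Topology

noncomputable section

abbrev Euc (n : ℕ) := EuclideanSpace ℝ (Fin n)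

def IsConvexBody {n : ℕ} (K : Set (Euc n)) : Prop :=
  IsCompact K ∧ Convex ℝ K ∧ (interior K).Nonempty

def IsOuterNormalAt {n : ℕ} (K : Set (Euc n)) (u x : Euc n) : Prop :=
  x ∈ frontier K ∧ ∀ y ∈ K, ⟪y, u⟫ ≤ ⟪x, u⟫

open Classical in
/-- The Gauss map: at a regular boundary point, the unique outer unit normal. -/
def gaussMap {n : ℕ} (K : Set (Euc n)) (x : Euc n) : Euc n :=
  if h : ∃ u, ‖u‖ = 1 ∧ IsOuterNormalAt K u x then h.choose else 0

open Classical in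
/-- The inverse Gauss map: at a regular normal vector, the unique boundary point
with that outer normal. -/
def gaussMapInv {n : ℕ} (K : Set (Euc n)) (u : Euc n) : Euc n :=
  if h : ∃ x, IsOuterNormalAt K u x then h.choose else 0

/-- The (n-1)-th curvature measure: (n-1)-dimensional Hausdorff measure on the boundary. -/
def bdryMeasure (n : ℕ) (K : Set (Euc n)) : Measure (Euc n) :=
  (Measure.hausdorffMeasure ((n : ℝ) - 1)).restrict (frontier K)

/-- The 0-th curvature measure: C₀(K,β) = H^{n-1}(ν(K,β)), realized as the pushforward of
the spherical Hausdorff measure under the inverse Gauss map. -/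
def curv0 (n : ℕ) (K : Set (Euc n)) : Measure (Euc n) :=
  Measure.map (gaussMapInv K)
    ((Measure.hausdorffMeasure ((n : ℝ) - 1)).restrict (Metric.sphere (0 : Euc n) 1))

/-- The generalized Gauss curvature H_K, as density of C₀(K,·) w.r.t. C_{n-1}(K,·). -/
def gaussCurv (n : ℕ) (K : Set (Euc n)) : Euc n → ℝ≥0∞ :=
  Measure.rnDeriv (curv0 n K) (bdryMeasure n K)

/-- The surface area measure S_K, pushforward of boundary Hausdorff measure by the Gauss map. -/
def surfaceMeasure (n : ℕ) (K : Set (Euc n)) : Measure (Euc n) :=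
  Measure.map (gaussMap K) (bdryMeasure n K)

/-- The generalized curvature function F_K, as density of S_K w.r.t. spherical Hausdorff measure. -/
def curvFn (n : ℕ) (K : Set (Euc n)) : Euc n → ℝ≥0∞ :=
  Measure.rnDeriv (surfaceMeasure n K)
    ((Measure.hausdorffMeasure ((n : ℝ) - 1)).restrict (Metric.sphere (0 : Euc n) 1))

/-- The support function of K. -/
def suppFn {n : ℕ} (K : Set (Euc n)) (x : Euc n) : ℝ :=
  sSup ((fun y => ⟪y, x⟫) '' K)

/-- L_p affine surface area, via curvature measures: the infimum over positive continuous
functions g on the boundary. -/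
def lpASA (n : ℕ) (p : ℝ) (K : Set (Euc n)) : ℝ≥0∞ :=
  sInf {v : ℝ≥0∞ | ∃ g : Euc n → ℝ, ContinuousOn g (frontier K) ∧
    (∀ x ∈ frontier K, 0 < g x) ∧
    v = (∫⁻ x, ENNReal.ofReal (g x) ^ (-(n : ℝ)) ∂(curv0 n K)) ^ (p / (n + p)) *
        (∫⁻ x, ENNReal.ofReal (g x) ^ p *
          ENNReal.ofReal (suppFn K (gaussMap K x)) ^ (1 - p) ∂(bdryMeasure n K)) ^ ((n : ℝ) / (n + p))}

theorem aux_anti {x y : ℝ≥0∞} {N : ℝ} (hN : 0 < N) (h : x ≤ y) : y ^ (-N) ≤ x ^ (-N) := by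
  rw [ENNReal.rpow_neg, ENNReal.rpow_neg]
  exact ENNReal.inv_le_inv.2 (ENNReal.rpow_le_rpow h hN.le)

theorem aux_max {X : Type*} [MeasurableSpace X] {μ : Measure X} {w w' : X → ℝ≥0∞}
    (hw' : Measurable w') (hle : w' ≤ w) (heq : ∫⁻ x, w x ∂μ = ∫⁻ x, w' x ∂μ)
    (hfin : ∫⁻ x, w x ∂μ ≠ ∞) {ψ : X → ℝ≥0∞} (hψ : AEMeasurable ψ μ) (h : ∀ᵐ x ∂μ, ψ x ≤ w x) :
    ∀ᵐ x ∂μ, ψ x ≤ w' x := by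
  have h1 : w' =ᵐ[μ] fun x => max (w' x) (ψ x) := by
    refine ae_eq_of_ae_le_of_lintegral_le (ae_of_all _ fun x => le_max_left _ _) (heq ▸ hfin)
      (hw'.aemeasurable.max hψ) ?_
    rw [← heq]
    refine lintegral_mono_ae ?_
    filter_upwards [h] with x hx
    exact max_le (hle x) hx
  filter_upwards [h1] with x hx
  rw [hx]; exact le_max_right _ _

theorem aux_mul {X : Type*} [MeasurableSpace X] {μ : Measure X} {w w' : X → ℝ≥0∞}
    (hw' : Measurable w') (hle : w' ≤ w) (heq : ∫⁻ x, w x ∂μ = ∫⁻ x, w' x ∂μ)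
    (hfin : ∫⁻ x, w x ∂μ ≠ ∞) {u : X → ℝ≥0∞} (hu : AEMeasurable u μ) (hut : ∀ᵐ x ∂μ, u x ≠ ∞)
    {b : ℝ} (hb : 0 < b) :
    ∫⁻ x, u x * w x ^ b ∂μ = ∫⁻ x, u x * w' x ^ b ∂μ := by
  refine le_antisymm ?_ (lintegral_mono fun x => ?_)
  · obtain ⟨φ, hφ, hφle, hφeq⟩ := exists_measurable_le_lintegral_eq (μ := μ) (fun x => u x * w x ^ b)
    rw [hφeq]
    have key := aux_max hw' hle heq hfin (ψ := fun x => (φ x / u x) ^ (1 / b))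
      ((hφ.aemeasurable.div hu).pow_const _) (by
        refine ae_of_all _ fun x => ?_
        have h1 : φ x / u x ≤ w x ^ b := by
          refine ENNReal.div_le_of_le_mul ?_
          rw [mul_comm]; exact hφle x
        calc (φ x / u x) ^ (1 / b) ≤ (w x ^ b) ^ (1 / b) :=
              ENNReal.rpow_le_rpow h1 (by positivity)
          _ = w x := by rw [← ENNReal.rpow_mul, mul_one_div_cancel hb.ne', ENNReal.rpow_one])
    refine lintegral_mono_ae ?_
    filter_upwards [key, hut] with x hx hxt
    have h2 : φ x / u x ≤ w' x ^ b := by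
      have := ENNReal.rpow_le_rpow hx hb.le
      rwa [← ENNReal.rpow_mul, one_div_mul_cancel hb.ne', ENNReal.rpow_one] at this
    by_cases h0 : u x = 0
    · have := hφle x
      simp only [h0, zero_mul] at this
      exact this.trans zero_le
    · rw [ENNReal.div_le_iff h0 hxt] at h2
      rwa [mul_comm]
  · gcongr
    exact hle x

theorem aux_approx {X : Type*} [MetricSpace X] [MeasurableSpace X] [BorelSpace X]
    (ρ : Measure X) [IsFiniteMeasure ρ] {g : X → ℝ} (hg : Measurable g) {lo hi : ℝ}
    (hlh : lo ≤ hi) (hlo : ∀ x, lo ≤ g x) (hhi : ∀ x, g x ≤ hi) :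
    ∃ G : ℕ → X → ℝ, (∀ j, Continuous (G j)) ∧ (∀ j x, lo ≤ G j x) ∧ (∀ j x, G j x ≤ hi) ∧
      ∀ᵐ x ∂ρ, Tendsto (fun j => G j x) atTop (𝓝 (g x)) := by
  have hgmem : MemLp g 1 ρ := by
    rw [memLp_one_iff_integrable]
    refine Integrable.of_bound hg.aestronglyMeasurable (max |lo| |hi|) (ae_of_all _ fun x => ?_)
    exact abs_le_max_abs_abs (hlo x) (hhi x)
  have hex : ∀ j : ℕ, ∃ f : BoundedContinuousFunction X ℝ,
      eLpNorm (g - (f : X → ℝ)) 1 ρ ≤ ((j : ℝ≥0∞) + 1)⁻¹ ∧ MemLp f 1 ρ := fun j =>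
    hgmem.exists_boundedContinuous_eLpNorm_sub_le ENNReal.one_ne_top (by simp)
  choose f hf hfm using hex
  have ht : TendstoInMeasure ρ (fun j => (f j : X → ℝ)) atTop g := by
    refine tendstoInMeasure_of_tendsto_eLpNorm one_ne_zero
      (fun j => (hfm j).aestronglyMeasurable) hgmem.aestronglyMeasurable ?_
    have h0 : Tendsto (fun j : ℕ => ((j : ℝ≥0∞) + 1)⁻¹) atTop (𝓝 0) := by
      have := (tendsto_add_atTop_iff_nat 1).2 ENNReal.tendsto_inv_nat_nhds_zero
      simpa using this
    refine tendsto_of_tendsto_of_tendsto_of_le_of_le tendsto_const_nhds h0 (fun _ => zero_le) ?_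
    intro j
    simp only
    rw [eLpNorm_sub_comm]
    exact hf j
  obtain ⟨ns, -, hns⟩ := ht.exists_seq_tendsto_ae
  refine ⟨fun j x => max lo (min hi (f (ns j) x)), fun j => ?_, fun j x => le_max_left _ _,
    fun j x => max_le hlh (min_le_left _ _), ?_⟩
  · exact continuous_const.max (continuous_const.min (f (ns j)).continuous)
  · filter_upwards [hns] with x hx
    have h3 : g x = max lo (min hi (g x)) := by
      rw [min_eq_right (hhi x), max_eq_right (hlo x)]
    rw [h3]
    exact tendsto_const_nhds.max (tendsto_const_nhds.min hx)

theorem aux_pt1 {H w T : ℝ≥0∞} {N p : ℝ} (hN : 0 < N) (hp : 0 < p) (hH : H ≠ ∞) (hw : w ≠ ∞)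
    (hH0 : H ≠ 0) (hT : T = (H / w) ^ (1 / (N + p))) :
    T ^ (-N) * H ≤ H ^ (p / (N + p)) * w ^ (N / (N + p)) := by
  by_cases hw0 : w = 0
  · have : T = ∞ := by
      rw [hT, hw0, ENNReal.div_zero hH0, ENNReal.top_rpow_of_pos (by positivity)]
    rw [this, ENNReal.top_rpow_of_neg (by linarith)]
    simp
  · have h1 : T ^ (-N) = (w / H) ^ (N / (N + p)) := by
      rw [hT, ← ENNReal.rpow_mul, show 1 / (N + p) * -N = -(N / (N + p)) by ring,
        ENNReal.rpow_neg, ← ENNReal.inv_rpow, ENNReal.inv_div (Or.inl hw) (Or.inl hw0)]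
    have h2 : H = H ^ (p / (N + p)) * H ^ (N / (N + p)) := by
      rw [← ENNReal.rpow_add _ _ hH0 hH, ← add_div, add_comm p N, div_self (by positivity),
        ENNReal.rpow_one]
    have h3 : H ^ (N / (N + p)) ≠ 0 := by
      intro h; rw [ENNReal.rpow_eq_zero_iff] at h
      rcases h with h | h
      · exact hH0 h.1
      · exact hH h.1
    have h4 : H ^ (N / (N + p)) ≠ ∞ := ENNReal.rpow_ne_top_of_nonneg (by positivity) hH
    rw [h1, ENNReal.div_rpow_of_nonneg _ _ (by positivity)]
    conv_lhs => rw [mul_comm]; arg 1; rw [h2]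
    rw [mul_assoc, ENNReal.mul_div_cancel h3 h4]

theorem aux_pt2 {H w T : ℝ≥0∞} {N p : ℝ} (hN : 0 < N) (hp : 0 < p) (hw : w ≠ ∞)
    (hT : T = (H / w) ^ (1 / (N + p))) :
    T ^ p * w ≤ H ^ (p / (N + p)) * w ^ (N / (N + p)) := by
  by_cases hw0 : w = 0
  · simp [hw0]
  · have h1 : T ^ p = (H / w) ^ (p / (N + p)) := by
      rw [hT, ← ENNReal.rpow_mul, one_div_mul_eq_div]
    have h2 : w = w ^ (p / (N + p)) * w ^ (N / (N + p)) := by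
      rw [← ENNReal.rpow_add _ _ hw0 hw, ← add_div, add_comm p N, div_self (by positivity),
        ENNReal.rpow_one]
    have h3 : w ^ (p / (N + p)) ≠ 0 := by
      intro h; rw [ENNReal.rpow_eq_zero_iff] at h
      rcases h with h | h
      · exact hw0 h.1
      · exact hw h.1
    have h4 : w ^ (p / (N + p)) ≠ ∞ := ENNReal.rpow_ne_top_of_nonneg (by positivity) hw
    rw [h1, ENNReal.div_rpow_of_nonneg _ _ (by positivity)]
    conv_lhs => arg 2; rw [h2]
    rw [← mul_assoc, ENNReal.div_mul_cancel h3 h4]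

/-- Hölder direction. -/
theorem aux_lower {X : Type*} [MeasurableSpace X] (μ ν : Measure X)
    [IsFiniteMeasure μ] [IsFiniteMeasure ν] {N p : ℝ} (hN : 0 < N) (hp : 0 < p)
    {w : X → ℝ≥0∞} (hfin : ∫⁻ x, w x ∂μ ≠ ∞) {g : X → ℝ} (hg : AEMeasurable g μ)
    (hpos : ∀ᵐ x ∂μ, 0 < g x) :
    ∫⁻ x, ν.rnDeriv μ x ^ (p / (N + p)) * w x ^ (N / (N + p)) ∂μ ≤
      (∫⁻ x, ENNReal.ofReal (g x) ^ (-N) ∂ν) ^ (p / (N + p)) *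
      (∫⁻ x, ENNReal.ofReal (g x) ^ p * w x ∂μ) ^ (N / (N + p)) := by
  obtain ⟨w', hw', hle, heq⟩ := exists_measurable_le_lintegral_eq (μ := μ) w
  have hHm := Measure.measurable_rnDeriv ν μ
  rw [aux_mul hw' hle heq hfin (hHm.aemeasurable.pow_const _) (by
    filter_upwards [Measure.rnDeriv_lt_top ν μ] with x hx
    exact ENNReal.rpow_ne_top_of_nonneg (by positivity) hx.ne) (by positivity)]
  have hab : p / (N + p) + N / (N + p) = 1 := by field_simp; ring
  calc _ = ∫⁻ x, (ν.rnDeriv μ x * ENNReal.ofReal (g x) ^ (-N)) ^ (p / (N + p)) *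
          (ENNReal.ofReal (g x) ^ p * w' x) ^ (N / (N + p)) ∂μ := by
        refine lintegral_congr_ae ?_
        filter_upwards [hpos] with x hx
        have h0 : ENNReal.ofReal (g x) ≠ 0 := by simpa using hx
        have ht : ENNReal.ofReal (g x) ≠ ∞ := ENNReal.ofReal_ne_top
        rw [ENNReal.mul_rpow_of_nonneg _ _ (by positivity),
          ENNReal.mul_rpow_of_nonneg _ _ (by positivity), ← ENNReal.rpow_mul, ← ENNReal.rpow_mul]
        have : ENNReal.ofReal (g x) ^ (-N * (p / (N + p))) * ENNReal.ofReal (g x) ^ (p * (N / (N + p)))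
            = 1 := by
          rw [← ENNReal.rpow_add _ _ h0 ht, show -N * (p / (N + p)) + p * (N / (N + p)) = 0 by ring,
            ENNReal.rpow_zero]
        rw [mul_assoc, ← mul_assoc (ENNReal.ofReal (g x) ^ (-N * (p / (N + p)))), this, one_mul]
    _ ≤ (∫⁻ x, ν.rnDeriv μ x * ENNReal.ofReal (g x) ^ (-N) ∂μ) ^ (p / (N + p)) *
          (∫⁻ x, ENNReal.ofReal (g x) ^ p * w' x ∂μ) ^ (N / (N + p)) :=
        ENNReal.lintegral_mul_norm_pow_le (hHm.aemeasurable.mul (hg.ennreal_ofReal.pow_const _))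
          ((hg.ennreal_ofReal.pow_const _).mul hw'.aemeasurable) (by positivity) (by positivity) hab
    _ ≤ _ := by
        have := lintegral_withDensity_eq_lintegral_mul₀ (μ := μ) hHm.aemeasurable
            (hg.ennreal_ofReal.pow_const (-N))
        simp only [Pi.mul_apply] at this
        rw [← this]
        refine mul_le_mul' (ENNReal.rpow_le_rpow ?_ (by positivity))
          (ENNReal.rpow_le_rpow (lintegral_mono fun x => ?_) (by positivity))
        · exact lintegral_mono' (Measure.withDensity_rnDeriv_le ν μ) le_rfl
        · exact mul_le_mul' le_rfl (hle x)

/-- Passing from continuous to bounded measurable test functions. -/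
theorem aux_meas {X : Type*} [MetricSpace X] [MeasurableSpace X] [BorelSpace X]
    (μ ν : Measure X) [IsFiniteMeasure μ] [IsFiniteMeasure ν] {N p : ℝ} (hN : 0 < N) (hp : 0 < p)
    {w : X → ℝ≥0∞} (hw : Measurable w) (hfin : ∫⁻ x, w x ∂μ ≠ ∞) {m : ℝ≥0∞}
    (hm : ∀ g : X → ℝ, Continuous g → (∀ x, 0 < g x) →
      m ≤ (∫⁻ x, ENNReal.ofReal (g x) ^ (-N) ∂ν) ^ (p / (N + p)) *
        (∫⁻ x, ENNReal.ofReal (g x) ^ p * w x ∂μ) ^ (N / (N + p)))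
    {g : X → ℝ} (hg : Measurable g) {lo hi : ℝ} (hlo0 : 0 < lo) (hlh : lo ≤ hi)
    (hlo : ∀ x, lo ≤ g x) (hhi : ∀ x, g x ≤ hi) :
    m ≤ (∫⁻ x, ENNReal.ofReal (g x) ^ (-N) ∂ν) ^ (p / (N + p)) *
        (∫⁻ x, ENNReal.ofReal (g x) ^ p * w x ∂μ) ^ (N / (N + p)) := by
  obtain ⟨G, hGc, hGlo, hGhi, hGt⟩ := aux_approx (μ + ν) hg hlh hlo hhi
  rw [ae_add_measure_iff] at hGt
  have bd1 : ∀ t : ℝ, lo ≤ t → ENNReal.ofReal t ^ (-N) ≤ ENNReal.ofReal lo ^ (-N) := fun t ht =>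
    aux_anti hN (ENNReal.ofReal_le_ofReal ht)
  have bd2 : ∀ t : ℝ, t ≤ hi → ENNReal.ofReal t ^ p ≤ ENNReal.ofReal hi ^ p := fun t ht =>
    ENNReal.rpow_le_rpow (ENNReal.ofReal_le_ofReal ht) hp.le
  have c1 : ENNReal.ofReal lo ^ (-N) ≠ ∞ := by
    refine ENNReal.rpow_ne_top_of_ne_zero (by simpa using hlo0) ENNReal.ofReal_ne_top
  have c2 : ENNReal.ofReal hi ^ p ≠ ∞ :=
    ENNReal.rpow_ne_top_of_nonneg hp.le ENNReal.ofReal_ne_top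
  have hwt : ∀ᵐ x ∂μ, w x ≠ ∞ := by
    filter_upwards [ae_lt_top hw hfin] with x hx using hx.ne
  have f1 : ∫⁻ x, ENNReal.ofReal lo ^ (-N) ∂ν ≠ ∞ := by
    rw [lintegral_const]; exact ENNReal.mul_ne_top c1 (measure_ne_top _ _)
  have f2 : ∫⁻ x, ENNReal.ofReal hi ^ p * w x ∂μ ≠ ∞ := by
    rw [lintegral_const_mul _ hw]; exact ENNReal.mul_ne_top c2 hfin
  have t1 : Tendsto (fun j => ∫⁻ x, ENNReal.ofReal (G j x) ^ (-N) ∂ν) atTop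
      (𝓝 (∫⁻ x, ENNReal.ofReal (g x) ^ (-N) ∂ν)) := by
    refine tendsto_lintegral_of_dominated_convergence (fun _ => ENNReal.ofReal lo ^ (-N))
      (fun j => ((hGc j).measurable.ennreal_ofReal.pow_const _))
      (fun j => ae_of_all _ fun x => bd1 _ (hGlo j x)) f1 ?_
    filter_upwards [hGt.2] with x hx
    exact (ENNReal.continuous_rpow_const.tendsto _).comp ((ENNReal.continuous_ofReal.tendsto _).comp hx)
  have t2 : Tendsto (fun j => ∫⁻ x, ENNReal.ofReal (G j x) ^ p * w x ∂μ) atTop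
      (𝓝 (∫⁻ x, ENNReal.ofReal (g x) ^ p * w x ∂μ)) := by
    refine tendsto_lintegral_of_dominated_convergence (fun x => ENNReal.ofReal hi ^ p * w x)
      (fun j => ((hGc j).measurable.ennreal_ofReal.pow_const _).mul hw)
      (fun j => ae_of_all _ fun x => mul_le_mul' (bd2 _ (hGhi j x)) le_rfl) f2 ?_
    filter_upwards [hGt.1, hwt] with x hx hxt
    exact ENNReal.Tendsto.mul_const ((ENNReal.continuous_rpow_const.tendsto _).comp
      ((ENNReal.continuous_ofReal.tendsto _).comp hx)) (Or.inr hxt)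
  have n1 : ∫⁻ x, ENNReal.ofReal (g x) ^ (-N) ∂ν ≠ ∞ :=
    ne_top_of_le_ne_top f1 (lintegral_mono fun x => bd1 _ (hlo x))
  have n2 : ∫⁻ x, ENNReal.ofReal (g x) ^ p * w x ∂μ ≠ ∞ :=
    ne_top_of_le_ne_top f2 (lintegral_mono fun x => mul_le_mul' (bd2 _ (hhi x)) le_rfl)
  have t3 := ENNReal.Tendsto.mul
    ((ENNReal.continuous_rpow_const (y := p / (N + p))).tendsto _ |>.comp t1)
    (Or.inr (ENNReal.rpow_ne_top_of_nonneg (by positivity) n2))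
    ((ENNReal.continuous_rpow_const (y := N / (N + p))).tendsto _ |>.comp t2)
    (Or.inr (ENNReal.rpow_ne_top_of_nonneg (by positivity) n1))
  exact ge_of_tendsto t3 (Eventually.of_forall fun j =>
    hm (G j) (hGc j) fun x => hlo0.trans_le (hGlo j x))

theorem aux_step {X : Type*} [MetricSpace X] [MeasurableSpace X] [BorelSpace X]
    (μ ν : Measure X) [IsFiniteMeasure μ] [IsFiniteMeasure ν] {N p : ℝ} (hN : 0 < N) (hp : 0 < p)
    {w : X → ℝ≥0∞} (hw : Measurable w) (hfin : ∫⁻ x, w x ∂μ ≠ ∞) {m : ℝ≥0∞}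
    (hm : ∀ g : X → ℝ, Continuous g → (∀ x, 0 < g x) →
      m ≤ (∫⁻ x, ENNReal.ofReal (g x) ^ (-N) ∂ν) ^ (p / (N + p)) *
        (∫⁻ x, ENNReal.ofReal (g x) ^ p * w x ∂μ) ^ (N / (N + p)))
    {k : ℝ} (hk : 1 ≤ k) :
    m ≤ ((∫⁻ x, ν.rnDeriv μ x ^ (p / (N + p)) * w x ^ (N / (N + p)) ∂μ) +
          ENNReal.ofReal k ^ (-N) * ν univ) ^ (p / (N + p)) *
        ((∫⁻ x, ν.rnDeriv μ x ^ (p / (N + p)) * w x ^ (N / (N + p)) ∂μ) +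
          ENNReal.ofReal k ^ (-p) * ∫⁻ x, w x ∂μ) ^ (N / (N + p)) := by
  have hHm := Measure.measurable_rnDeriv ν μ
  obtain ⟨S, hS, hSs, hSμ⟩ := Measure.mutuallySingular_singularPart ν μ
  -- singularPart S = 0, μ Sᶜ = 0
  classical
  set κ : ℝ≥0∞ := ENNReal.ofReal k with hκ
  have hk0 : 0 < k := by linarith
  have hκ1 : 1 ≤ κ := by rw [hκ, ← ENNReal.ofReal_one]; exact ENNReal.ofReal_le_ofReal hk
  have hκt : κ ≠ ∞ := ENNReal.ofReal_ne_top
  have hκi : κ⁻¹ ≤ κ := (ENNReal.inv_le_one.2 hκ1).trans hκ1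
  set H := ν.rnDeriv μ with hH
  let T : X → ℝ≥0∞ := fun x => (H x / w x) ^ (1 / (N + p))
  let G : X → ℝ≥0∞ := S.piecewise (fun x => max κ⁻¹ (min κ (T x))) (fun _ => κ)
  have hT : Measurable T := (hHm.div hw).pow_const _
  have hG : Measurable G := (measurable_const.max (measurable_const.min hT)).piecewise hS
    measurable_const
  have hG1 : ∀ x, κ⁻¹ ≤ G x := fun x => by
    by_cases hx : x ∈ S
    · simp only [G, hx, Set.piecewise_eq_of_mem]; exact le_max_left _ _
    · simp only [G, hx, not_false_eq_true, Set.piecewise_eq_of_notMem]; exact hκi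
  have hG2 : ∀ x, G x ≤ κ := fun x => by
    by_cases hx : x ∈ S
    · simp only [G, hx, Set.piecewise_eq_of_mem]; exact max_le hκi (min_le_left _ _)
    · simp only [G, hx, not_false_eq_true, Set.piecewise_eq_of_notMem]; exact le_rfl
  have hGt : ∀ x, G x ≠ ∞ := fun x => ne_top_of_le_ne_top hκt (hG2 x)
  have key := aux_meas μ ν hN hp hw hfin hm (g := fun x => (G x).toReal) hG.ennreal_toReal
    (lo := k⁻¹) (hi := k) (by positivity) ((inv_le_one_of_one_le₀ hk).trans hk)
    (fun x => by
      have := ENNReal.toReal_mono (hGt x) (hG1 x)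
      rwa [ENNReal.toReal_inv, hκ, ENNReal.toReal_ofReal hk0.le] at this)
    (fun x => by
      have := ENNReal.toReal_mono hκt (hG2 x)
      rwa [hκ, ENNReal.toReal_ofReal hk0.le] at this)
  simp only [ENNReal.ofReal_toReal (hGt _)] at key
  refine key.trans (mul_le_mul' (ENNReal.rpow_le_rpow ?_ (by positivity))
    (ENNReal.rpow_le_rpow ?_ (by positivity)))
  · have hμS : ∀ᵐ x ∂μ, x ∈ S := by
      rw [ae_iff]; exact hSμ
    have hsS : ∀ᵐ x ∂(ν.singularPart μ), x ∉ S := by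
      rw [ae_iff]; simpa using hSs
    have hdec := Measure.haveLebesgueDecomposition_add ν μ
    have hI : ∫⁻ x, G x ^ (-N) ∂ν = ∫⁻ x, G x ^ (-N) ∂(ν.singularPart μ) +
        ∫⁻ x, H x * G x ^ (-N) ∂μ := by
      conv_lhs => rw [hdec]
      rw [lintegral_add_measure, lintegral_withDensity_eq_lintegral_mul₀ hHm.aemeasurable
        (hG.pow_const _).aemeasurable]
      rfl
    have hI1 : ∫⁻ x, G x ^ (-N) ∂(ν.singularPart μ) = κ ^ (-N) * (ν.singularPart μ) univ := by
      rw [← lintegral_const]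
      refine lintegral_congr_ae ?_
      filter_upwards [hsS] with x hx
      simp only [G, hx, not_false_eq_true, Set.piecewise_eq_of_notMem]
    have hI2 : ∫⁻ x, H x * G x ^ (-N) ∂μ ≤
        ∫⁻ x, (H x ^ (p / (N + p)) * w x ^ (N / (N + p)) + κ ^ (-N) * H x) ∂μ := by
      refine lintegral_mono_ae ?_
      filter_upwards [hμS, Measure.rnDeriv_lt_top ν μ, ae_lt_top hw hfin] with x hx hHx hwx
      by_cases h0 : H x = 0
      · simp [h0]
      have h1 : G x ^ (-N) ≤ T x ^ (-N) + κ ^ (-N) := by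
        simp only [G, hx, Set.piecewise_eq_of_mem]
        have h2 : (max κ⁻¹ (min κ (T x))) ^ (-N) ≤ (min κ (T x)) ^ (-N) :=
          aux_anti hN (le_max_right _ _)
        refine h2.trans ?_
        rcases min_choice κ (T x) with h | h <;> rw [h]
        · exact le_add_self
        · exact le_self_add
      calc H x * G x ^ (-N) ≤ H x * (T x ^ (-N) + κ ^ (-N)) := mul_le_mul' le_rfl h1
        _ = T x ^ (-N) * H x + κ ^ (-N) * H x := by ring
        _ ≤ _ := add_le_add (aux_pt1 hN hp hHx.ne hwx.ne h0 rfl) le_rfl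
    have hI3 : ν univ = (ν.singularPart μ) univ + ∫⁻ x, H x ∂μ := by
      conv_lhs => rw [hdec]
      rw [Measure.add_apply, withDensity_apply _ MeasurableSet.univ, Measure.restrict_univ]
    rw [lintegral_add_right _ (hHm.const_mul _), lintegral_const_mul _ hHm] at hI2
    rw [hI, hI1, hI3]
    calc _ ≤ _ := add_le_add le_rfl hI2
      _ = _ := by ring
  · have hμS : ∀ᵐ x ∂μ, x ∈ S := by
      rw [ae_iff]; exact hSμ
    rw [← lintegral_const_mul _ hw, ← lintegral_add_right _ (hw.const_mul _)]
    refine lintegral_mono_ae ?_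
    filter_upwards [hμS, ae_lt_top hw hfin] with x hx hwx
    have h1 : G x ^ p ≤ T x ^ p + κ ^ (-p) := by
      simp only [G, hx, Set.piecewise_eq_of_mem]
      have h2 : (max κ⁻¹ (min κ (T x))) ^ p ≤ (max κ⁻¹ (T x)) ^ p :=
        ENNReal.rpow_le_rpow (max_le_max le_rfl (min_le_right _ _)) hp.le
      refine h2.trans ?_
      rcases max_choice κ⁻¹ (T x) with h | h <;> rw [h]
      · rw [ENNReal.inv_rpow, ← ENNReal.rpow_neg]; exact le_add_self
      · exact le_self_add
    calc G x ^ p * w x ≤ (T x ^ p + κ ^ (-p)) * w x := mul_le_mul' h1 le_rfl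
      _ = T x ^ p * w x + κ ^ (-p) * w x := by ring
      _ ≤ _ := add_le_add (aux_pt2 hN hp hwx.ne rfl) le_rfl

theorem aux_upper {X : Type*} [MetricSpace X] [MeasurableSpace X] [BorelSpace X]
    (μ ν : Measure X) [IsFiniteMeasure μ] [IsFiniteMeasure ν] {N p : ℝ} (hN : 0 < N) (hp : 0 < p)
    {w : X → ℝ≥0∞} (hfin : ∫⁻ x, w x ∂μ ≠ ∞) {m : ℝ≥0∞}
    (hm : ∀ g : X → ℝ, Continuous g → (∀ x, 0 < g x) →
      m ≤ (∫⁻ x, ENNReal.ofReal (g x) ^ (-N) ∂ν) ^ (p / (N + p)) *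
        (∫⁻ x, ENNReal.ofReal (g x) ^ p * w x ∂μ) ^ (N / (N + p))) :
    m ≤ ∫⁻ x, ν.rnDeriv μ x ^ (p / (N + p)) * w x ^ (N / (N + p)) ∂μ := by
  obtain ⟨w', hw', hle, heq⟩ := exists_measurable_le_lintegral_eq (μ := μ) w
  have hfin' : ∫⁻ x, w' x ∂μ ≠ ∞ := heq ▸ hfin
  refine le_trans ?_ (lintegral_mono (f := fun x =>
    ν.rnDeriv μ x ^ (p / (N + p)) * w' x ^ (N / (N + p))) fun x =>
      mul_le_mul' le_rfl (ENNReal.rpow_le_rpow (hle x) (by positivity)))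
  set I := ∫⁻ x, ν.rnDeriv μ x ^ (p / (N + p)) * w' x ^ (N / (N + p)) ∂μ with hI
  by_cases hIt : I = ∞
  · rw [hIt]; exact le_top
  have hstep := fun j : ℕ => aux_step μ ν hN hp hw' hfin' (m := m) (by
      intro g hg hg0
      refine (hm g hg hg0).trans_eq ?_
      have := aux_mul hw' hle heq hfin (u := fun x => ENNReal.ofReal (g x) ^ p)
        (hg.measurable.ennreal_ofReal.pow_const _).aemeasurable
        (ae_of_all _ fun x => ENNReal.rpow_ne_top_of_nonneg hp.le ENNReal.ofReal_ne_top) one_pos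
      simp only [ENNReal.rpow_one] at this
      rw [this]) (k := (j : ℝ) + 1) (by linarith [j.cast_nonneg (α := ℝ)])
  have hz : ∀ s : ℝ, 0 < s → Tendsto (fun j : ℕ => ENNReal.ofReal ((j : ℝ) + 1) ^ (-s)) atTop
      (𝓝 0) := by
    intro s hs
    have h1 : Tendsto (fun j : ℕ => ENNReal.ofReal ((j : ℝ) + 1)) atTop (𝓝 ∞) := by
      refine ENNReal.tendsto_ofReal_atTop.comp ?_
      exact tendsto_atTop_add_const_right _ _ tendsto_natCast_atTop_atTop
    have h2 := (ENNReal.continuous_rpow_const (y := -s)).tendsto ∞ |>.comp h1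
    rwa [ENNReal.top_rpow_of_neg (by linarith)] at h2
  have hz' : ∀ s : ℝ, 0 < s → ∀ c : ℝ≥0∞, c ≠ ∞ →
      Tendsto (fun j : ℕ => I + ENNReal.ofReal ((j : ℝ) + 1) ^ (-s) * c) atTop (𝓝 I) := by
    intro s hs c hc
    have := (ENNReal.Tendsto.mul_const (hz s hs) (Or.inr hc)).const_add I
    simpa using this
  have t3 := ENNReal.Tendsto.mul
    ((ENNReal.continuous_rpow_const (y := p / (N + p))).tendsto _ |>.comp
      (hz' N hN _ (measure_ne_top ν univ)))
    (Or.inr (ENNReal.rpow_ne_top_of_nonneg (by positivity) hIt))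
    ((ENNReal.continuous_rpow_const (y := N / (N + p))).tendsto _ |>.comp (hz' p hp _ hfin'))
    (Or.inr (ENNReal.rpow_ne_top_of_nonneg (by positivity) hIt))
  have h4 : I ^ (p / (N + p)) * I ^ (N / (N + p)) = I := by
    rw [← ENNReal.rpow_add_of_nonneg _ _ (by positivity) (by positivity), ← add_div, add_comm p N,
      div_self (by positivity), ENNReal.rpow_one]
  rw [h4] at t3
  exact ge_of_tendsto t3 (Eventually.of_forall hstep)

def cubeFace (m : ℕ) (i : Fin (m + 1)) (s : ℝ) : Set (Euc (m + 1)) :=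
  (fun y : Fin m → ℝ => (WithLp.toLp 2 (Fin.insertNth (α := fun _ => ℝ) i s y) : Euc (m + 1))) '' Icc (-1) 1

theorem cubeFace_finite (m : ℕ) (i : Fin (m + 1)) (s : ℝ) :
    Measure.hausdorffMeasure (m : ℝ) (cubeFace m i s) < ∞ := by
  have h1 : LipschitzWith 1 (fun y : Fin m → ℝ => Fin.insertNth (α := fun _ => ℝ) i s y) := by
    refine LipschitzWith.of_dist_le_mul fun x y => ?_
    rw [NNReal.coe_one, one_mul]
    refine (dist_pi_le_iff dist_nonneg).2 fun j => ?_
    refine Fin.succAboveCases i ?_ (fun j => ?_) j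
    · simp
    · simpa using dist_le_pi_dist x y j
  have h2 := (PiLp.lipschitzWith_toLp 2 (fun _ : Fin (m + 1) => ℝ)).comp h1
  have h3 := h2.hausdorffMeasure_image_le (d := (m : ℝ)) (by positivity) (Icc (-1) 1)
  refine lt_of_le_of_lt h3 (ENNReal.mul_lt_top ?_ ?_)
  · exact ENNReal.rpow_lt_top_of_nonneg (by positivity) ENNReal.coe_ne_top
  · have := hausdorffMeasure_pi_real (ι := Fin m)
    rw [Fintype.card_fin] at this
    rw [this]
    exact isCompact_Icc.measure_lt_top

theorem exists_face (m : ℕ) (y : Euc (m + 1)) (hy : y ≠ 0) :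
    ∃ t : ℝ, 0 < t ∧ ∃ i, t⁻¹ • y ∈ cubeFace m i 1 ∪ cubeFace m i (-1) := by
  obtain ⟨i, -, hi⟩ := Finset.exists_max_image (Finset.univ : Finset (Fin (m + 1)))
    (fun j => |y j|) ⟨0, Finset.mem_univ _⟩
  have ht : 0 < |y i| := by
    rw [abs_pos]
    intro h
    apply hy
    ext j
    have := hi j (Finset.mem_univ _)
    rw [h, abs_zero] at this
    simpa using this
  refine ⟨|y i|, ht, i, ?_⟩
  have key : ∀ s : ℝ, |y i|⁻¹ * y i = s → |y i|⁻¹ • y ∈ cubeFace m i s := by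
    intro s hs
    refine ⟨fun j => |y i|⁻¹ * y (i.succAbove j), ?_, ?_⟩
    · have hb : ∀ j, |(|y i|⁻¹ * y j)| ≤ 1 := fun j => by
        rw [abs_mul, abs_inv, abs_abs, inv_mul_le_iff₀ ht, mul_one]
        exact hi j (Finset.mem_univ _)
      exact ⟨fun j => (abs_le.1 (hb _)).1, fun j => (abs_le.1 (hb _)).2⟩
    · ext j
      refine Fin.succAboveCases i ?_ (fun j => ?_) j
      · simp [hs]
      · simp
  rcases abs_choice (y i) with h | h
  · left; apply key; rw [h] at ht ⊢; exact inv_mul_cancel₀ ht.ne'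
  · right; apply key; rw [h] at ht ⊢
    have : y i ≠ 0 := by intro h0; simp [h0] at ht
    field_simp

theorem norm_face (m : ℕ) (i : Fin (m + 1)) (s : ℝ) (hs : |s| = 1) (z : Euc (m + 1))
    (hz : z ∈ cubeFace m i s) : 1 ≤ ‖z‖ := by
  obtain ⟨y, -, rfl⟩ := hz
  have := PiLp.norm_apply_le (p := 2) (WithLp.toLp 2 (Fin.insertNth (α := fun _ => ℝ) i s y) : Euc (m + 1)) i
  simpa [hs] using this

theorem frontier_finite (m : ℕ) (K : Set (Euc (m + 1))) (hK : IsCompact K) (hc : Convex ℝ K)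
    (h0 : (0 : Euc (m + 1)) ∈ interior K) :
    Measure.hausdorffMeasure (m : ℝ) (frontier K) < ∞ := by
  have hn : K ∈ 𝓝 (0 : Euc (m + 1)) := mem_interior_iff_mem_nhds.1 h0
  obtain ⟨L, hL⟩ := hc.lipschitz_gauge hn
  obtain ⟨R, hR0, hR⟩ := hK.isBounded.subset_closedBall_lt 0 0
  let Φ : Euc (m + 1) → Euc (m + 1) := fun z => (gauge K z)⁻¹ • z
  have hg : ∀ z, ‖z‖ ≤ R * gauge K z := fun z => by
    have := le_gauge_of_subset_closedBall (x := z) (absorbent_nhds_zero hn) hR0.le hR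
    rwa [div_le_iff₀' hR0] at this
  have hlip : LipschitzOnWith (Real.toNNReal (R + R * (R * L))) Φ {z | 1 ≤ ‖z‖} := by
    refine LipschitzOnWith.of_dist_le_mul fun x hx y hy => ?_
    rw [Real.coe_toNNReal _ (by positivity)]
    have hx' : 1 ≤ ‖x‖ := hx
    have hy' : 1 ≤ ‖y‖ := hy
    have gx : 0 < gauge K x := by
      by_contra h; nlinarith [hg x, hR0]
    have gy : 0 < gauge K y := by
      by_contra h; nlinarith [hg y, hR0]
    have ix : (gauge K x)⁻¹ ≤ R := by
      rw [inv_le_iff_one_le_mul₀ gx]; linarith [hg x]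
    have hd : |gauge K y - gauge K x| ≤ L * ‖x - y‖ := by
      have := hL.dist_le_mul y x
      rwa [Real.dist_eq, dist_comm, dist_eq_norm] at this
    have heq : Φ x - Φ y = (gauge K x)⁻¹ • (x - y) +
        ((gauge K x)⁻¹ * ((gauge K y - gauge K x) * (gauge K y)⁻¹)) • y := by
      simp only [Φ]
      rw [smul_sub, show (gauge K x)⁻¹ * ((gauge K y - gauge K x) * (gauge K y)⁻¹) =
        (gauge K x)⁻¹ - (gauge K y)⁻¹ by field_simp, sub_smul]
      abel
    have hyR : (gauge K y)⁻¹ * ‖y‖ ≤ R := by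
      rw [inv_mul_le_iff₀ gy]; linarith [hg y]
    rw [dist_eq_norm, heq, dist_eq_norm]
    refine (norm_add_le _ _).trans ?_
    rw [norm_smul, norm_smul, norm_mul, norm_mul, norm_inv, norm_inv, Real.norm_of_nonneg gx.le,
      Real.norm_of_nonneg gy.le, Real.norm_eq_abs]
    have a1 : (gauge K x)⁻¹ * ‖x - y‖ ≤ R * ‖x - y‖ := by gcongr
    have a2 : (gauge K x)⁻¹ * (|gauge K y - gauge K x| * (gauge K y)⁻¹) * ‖y‖ ≤
        R * ((L * ‖x - y‖) * R) := by
      rw [mul_assoc, mul_assoc]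
      gcongr
    linarith
  have hsub : frontier K ⊆ ⋃ i : Fin (m + 1), (Φ '' cubeFace m i 1 ∪ Φ '' cubeFace m i (-1)) := by
    intro y hy
    have hy1 : gauge K y = 1 := (gauge_eq_one_iff_mem_frontier hc hn).2 hy
    have hy0 : y ≠ 0 := by rintro rfl; simp at hy1
    obtain ⟨t, ht, i, hi⟩ := exists_face m y hy0
    rw [mem_iUnion]
    refine ⟨i, ?_⟩
    rw [← image_union]
    refine ⟨_, hi, ?_⟩
    simp only [Φ]
    rw [gauge_smul_of_nonneg (by positivity), hy1, smul_smul]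
    simp [ht.ne']
  have hface : ∀ i s, |s| = (1 : ℝ) → Measure.hausdorffMeasure (m : ℝ) (Φ '' cubeFace m i s) < ∞ := by
    intro i s hs
    have := (hlip.mono (fun z hz => norm_face m i s hs z hz)).hausdorffMeasure_image_le
      (d := (m : ℝ)) (by positivity)
    refine this.trans_lt (ENNReal.mul_lt_top ?_ (cubeFace_finite m i s))
    exact ENNReal.rpow_lt_top_of_nonneg (by positivity) ENNReal.coe_ne_top
  refine (measure_mono hsub).trans_lt ((measure_iUnion_fintype_le _ _).trans_lt ?_)
  refine ENNReal.sum_lt_top.2 fun i _ => ?_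
  exact measure_union_lt_top (hface i 1 (by simp)) (hface i (-1) (by simp))

theorem gaussMap_spec {n : ℕ} (K : Set (Euc n)) (hc : Convex ℝ K)
    (h0 : (0 : Euc n) ∈ interior K) {x : Euc n} (hx : x ∈ frontier K) : ‖gaussMap K x‖ = 1 := by
  have hex : ∃ u, ‖u‖ = 1 ∧ IsOuterNormalAt K u x := by
    obtain ⟨f, hf⟩ := geometric_hahn_banach_open_point hc.interior isOpen_interior hx.2
    let v : Euc n := (InnerProductSpace.toDual ℝ (Euc n)).symm f
    have hv : ∀ y, ⟪y, v⟫ = f y := fun y => by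
      rw [real_inner_comm]; exact InnerProductSpace.toDual_symm_apply
    have hv0 : v ≠ 0 := by
      intro h
      have h1 := hf 0 h0
      rw [← hv, ← hv, h] at h1
      simp at h1
    have hvn : 0 < ‖v‖ := norm_pos_iff.2 hv0
    refine ⟨‖v‖⁻¹ • v, ?_, hx, fun y hy => ?_⟩
    · rw [norm_smul, norm_inv, norm_norm, inv_mul_cancel₀ hvn.ne']
    · rw [real_inner_smul_right, real_inner_smul_right]
      refine mul_le_mul_of_nonneg_left ?_ (by positivity)
      rw [hv, hv]
      have hcl : K ⊆ closure (interior K) := by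
        rw [hc.closure_interior_eq_closure_of_nonempty_interior ⟨0, h0⟩]
        exact subset_closure
      have hsub : closure (interior K) ⊆ {z | f z ≤ f x} :=
        closure_minimal (fun z hz => (hf z hz).le) (isClosed_le f.continuous continuous_const)
      exact hsub (hcl hy)
  unfold gaussMap
  rw [dif_pos hex]
  exact hex.choose_spec.1

theorem suppFn_bounds {n : ℕ} (K : Set (Euc n)) (hK : IsCompact K)
    (h0 : (0 : Euc n) ∈ interior K) :
    ∃ r R : ℝ, 0 < r ∧ ∀ u : Euc n, ‖u‖ = 1 → r ≤ suppFn K u ∧ suppFn K u ≤ R := by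
  obtain ⟨R, hR0, hR⟩ := hK.isBounded.subset_closedBall_lt 0 0
  obtain ⟨r, hr0, hr⟩ := Metric.mem_nhds_iff.1 (mem_interior_iff_mem_nhds.1 h0)
  refine ⟨r / 2, R, by positivity, fun u hu => ?_⟩
  have hb : ∀ t ∈ (fun y => ⟪y, u⟫) '' K, t ≤ R := by
    rintro _ ⟨y, hy, rfl⟩
    have := real_inner_le_norm y u
    have h2 := hR hy
    rw [mem_closedBall_zero_iff] at h2
    rw [hu, mul_one] at this
    exact this.trans h2
  have hm : (r / 2) • u ∈ K := by
    apply hr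
    rw [mem_ball_zero_iff, norm_smul, hu, mul_one, Real.norm_of_nonneg (by positivity)]
    linarith
  constructor
  · refine le_csSup ⟨R, hb⟩ ⟨_, hm, ?_⟩
    simp only [real_inner_smul_left, real_inner_self_eq_norm_sq, hu]
    norm_num
  · exact csSup_le ⟨_, ⟨_, hm, rfl⟩⟩ hb

theorem bdry_finite (n : ℕ) (hn : 0 < n) (K : Set (Euc n)) (hK : IsCompact K) (hc : Convex ℝ K)
    (h0 : (0 : Euc n) ∈ interior K) : IsFiniteMeasure (bdryMeasure n K) := by
  obtain ⟨m, rfl⟩ : ∃ m, n = m + 1 := ⟨n - 1, by omega⟩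
  refine ⟨?_⟩
  rw [bdryMeasure, Measure.restrict_apply_univ]
  have := frontier_finite m K hK hc h0
  push_cast
  rwa [add_sub_cancel_right]

theorem curv0_finite (n : ℕ) (hn : 0 < n) (K : Set (Euc n)) : IsFiniteMeasure (curv0 n K) := by
  obtain ⟨m, rfl⟩ : ∃ m, n = m + 1 := ⟨n - 1, by omega⟩
  have h := bdry_finite (m + 1) hn (closedBall 0 1) (isCompact_closedBall _ _)
    (convex_closedBall _ _) (ball_subset_interior_closedBall (mem_ball_self one_pos))
  rw [bdryMeasure, frontier_closedBall _ one_ne_zero] at h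
  unfold curv0
  infer_instance

theorem statement8 (n : ℕ) (hn : 0 < n) (p : ℝ) (hp : 0 < p) (K : Set (Euc n))
    (hK : IsConvexBody K) (h0 : (0 : Euc n) ∈ interior K) :
    lpASA n p K =
      ∫⁻ x, (gaussCurv n K x /
          ENNReal.ofReal (suppFn K (gaussMap K x)) ^ ((p - 1) * n / p)) ^ (p / (n + p))
        ∂(bdryMeasure n K) := by
  have := bdry_finite n hn K hK.1 hK.2.1 h0
  have := curv0_finite n hn K
  have hN : (0 : ℝ) < n := by exact_mod_cast hn
  obtain ⟨r, R, hr, hb⟩ := suppFn_bounds K hK.1 h0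
  have hF : ∀ᵐ x ∂(bdryMeasure n K), x ∈ frontier K :=
    ae_restrict_mem isClosed_frontier.measurableSet
  have hfin : ∫⁻ x, ENNReal.ofReal (suppFn K (gaussMap K x)) ^ (1 - p) ∂(bdryMeasure n K) ≠ ∞ := by
    set C : ℝ≥0∞ := max (ENNReal.ofReal r ^ (1 - p)) (ENNReal.ofReal R ^ (1 - p)) with hC
    have hle : ∀ x ∈ frontier K, ENNReal.ofReal (suppFn K (gaussMap K x)) ^ (1 - p) ≤ C ∧ C ≠ ∞ := by
      intro x hx
      obtain ⟨h1, h2⟩ := hb _ (gaussMap_spec K hK.2.1 h0 hx)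
      constructor
      · rcases le_or_gt 0 (1 - p) with h | h
        · exact (ENNReal.rpow_le_rpow (ENNReal.ofReal_le_ofReal h2) h).trans (le_max_right _ _)
        · have := aux_anti (N := p - 1) (by linarith) (ENNReal.ofReal_le_ofReal h1)
          rw [neg_sub] at this
          exact this.trans (le_max_left _ _)
      · refine (max_lt ?_ ?_).ne
        · exact (ENNReal.rpow_ne_top_of_ne_zero (by simpa using hr) ENNReal.ofReal_ne_top).lt_top
        · exact (ENNReal.rpow_ne_top_of_ne_zero (by simpa using hr.trans_le (h1.trans h2))
            ENNReal.ofReal_ne_top).lt_top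
    rcases (frontier K).eq_empty_or_nonempty with he | ⟨x₀, hx₀⟩
    · simp [bdryMeasure, he]
    · have h1 : ∫⁻ x, ENNReal.ofReal (suppFn K (gaussMap K x)) ^ (1 - p) ∂(bdryMeasure n K) ≤
          ∫⁻ _, C ∂(bdryMeasure n K) :=
        lintegral_mono_ae (by filter_upwards [hF] with x hx using (hle x hx).1)
      refine ne_top_of_le_ne_top ?_ h1
      rw [lintegral_const]
      exact ENNReal.mul_ne_top (hle x₀ hx₀).2 (measure_ne_top _ _)
  have hrhs : ∀ x, (gaussCurv n K x /
      ENNReal.ofReal (suppFn K (gaussMap K x)) ^ ((p - 1) * n / p)) ^ (p / (n + p)) =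
      (curv0 n K).rnDeriv (bdryMeasure n K) x ^ (p / (n + p)) *
      (ENNReal.ofReal (suppFn K (gaussMap K x)) ^ (1 - p)) ^ ((n : ℝ) / (n + p)) := by
    intro x
    rw [div_eq_mul_inv, ENNReal.mul_rpow_of_nonneg _ _ (by positivity), ← ENNReal.rpow_neg,
      ← ENNReal.rpow_mul, ← ENNReal.rpow_mul]
    congr 2
    field_simp
    ring
  simp only [hrhs]
  refine le_antisymm ?_ ?_
  · refine aux_upper (bdryMeasure n K) (curv0 n K) hN hp hfin fun g hg hg0 => ?_
    exact sInf_le ⟨g, hg.continuousOn, fun x _ => hg0 x, rfl⟩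
  · refine le_sInf ?_
    rintro v ⟨g, hg, hg0, rfl⟩
    refine aux_lower (bdryMeasure n K) (curv0 n K) hN hp hfin ?_ ?_
    · exact hg.aemeasurable isClosed_frontier.measurableSet
    · filter_upwards [hF] with x hx using hg0 x hx

end
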